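/- The composition product sgn₂[sgn_n], the S_{2n}-representation induced from the wreath product S_n ≀ S₂, decomposes into irreducibles as the multiplicity-free direct sum of S^{2^{n−i} 1^{2i}} over all odd i with 1 ≤ i ≤ n. -/

import Mathlib

open Finset Equiv

noncomputable section
attribute [local instance] Classical.propDecidable

/-- The group algebra `ℂ[S_N]`.  All representations are over `ℂ`; a left ideal of the
group algebra is an `S_N`-representation via left multiplication. -/
abbrev GA (N : ℕ) := MonoidAlgebra ℂ (Equiv.Perm (Fin N))

/-- A permutation as an element of the group algebra. -/
def ofP {N : ℕ} (σ : Equiv.Perm (Fin N)) : GA N :=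
  MonoidAlgebra.of ℂ (Equiv.Perm (Fin N)) σ

/-- The sign of a permutation, as a complex scalar. -/
def sgnC {n : ℕ} (σ : Equiv.Perm (Fin n)) : ℂ := ((Equiv.Perm.sign σ : ℤ) : ℂ)

/-- The subgroup (as a finset) of permutations preserving the fibers of `h`
(e.g. the row or the column stabilizer of a tableau). -/
def stab {N : ℕ} (h : Fin N → ℕ) : Finset (Equiv.Perm (Fin N)) :=
  Finset.univ.filter (fun σ => ∀ x, h (σ x) = h x)

/-- The Young symmetrizer of a tableau given by its row and column functions. -/
def youngSym {N : ℕ} (row col : Fin N → ℕ) : GA N :=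
  (∑ σ ∈ stab col, sgnC σ • ofP σ) * (∑ σ ∈ stab row, ofP σ)

/-- `f` is a partition of `N`: a weakly decreasing sequence of row lengths, supported on
the first `N` values, with total sum `N`. -/
def IsPartitionN (f : ℕ → ℕ) (N : ℕ) : Prop :=
  Antitone f ∧ (∀ i, N ≤ i → f i = 0) ∧ ∑ i ∈ Finset.range N, f i = N

/-- `(row, col)` is a Young tableau of shape `f` on the letters `Fin N`: the letters
occupy exactly the cells of the Young diagram of `f`, each cell once. -/
def IsTableau {N : ℕ} (f : ℕ → ℕ) (row col : Fin N → ℕ) : Prop :=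
  Function.Injective (fun x => (row x, col x)) ∧
  ∀ r c : ℕ, (∃ x, row x = r ∧ col x = c) ↔ c < f r

/-- The Specht module `S^f`, realized as the left ideal of `ℂ[S_N]` generated by the
Young symmetrizer of a tableau of shape `f`. -/
def SpechtIdeal {N : ℕ} (row col : Fin N → ℕ) : Ideal (GA N) :=
  Ideal.span {youngSym row col}

/-- The length of the last column of the partition `f` (with at most `N` parts):
the number of parts equal to the largest part. -/
def lastColLen (f : ℕ → ℕ) (N : ℕ) : ℕ :=
  ((Finset.range N).filter (fun i => f i = f 0)).card

/-- The number of (positive) parts of `f`, i.e. the length of its first column. -/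
def numParts (f : ℕ → ℕ) (N : ℕ) : ℕ :=
  ((Finset.range N).filter (fun i => 0 < f i)).card

/-- `σ` preserves each of the two blocks `{0,…,n-1}` and `{n,…,2n-1}` of `Fin (2n)`. -/
def presBlocks (n : ℕ) (σ : Equiv.Perm (Fin (2 * n))) : Prop :=
  ∀ x, ((σ x : ℕ) < n ↔ (x : ℕ) < n)

/-- `σ` interchanges the two blocks `{0,…,n-1}` and `{n,…,2n-1}` of `Fin (2n)`. -/
def swapsBlocks (n : ℕ) (σ : Equiv.Perm (Fin (2 * n))) : Prop :=
  ∀ x, ((σ x : ℕ) < n ↔ n ≤ (x : ℕ))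

/-- The wreath product `S_n ≀ S₂ ⊆ S_{2n}`: the permutations preserving the partition of
`Fin (2n)` into the two blocks. -/
def wreath (n : ℕ) : Finset (Equiv.Perm (Fin (2 * n))) :=
  Finset.univ.filter (fun σ => presBlocks n σ ∨ swapsBlocks n σ)

/-- The one-dimensional character of `S_n ≀ S₂` corresponding to `sgn₂[sgn_n]`: it equals
`sgn(σ₁)sgn(σ₂)` on block-preserving elements `(σ₁, σ₂)` and `−sgn(σ₁)sgn(σ₂)` on
block-swapping elements, i.e. `sgn(σ) · (−1)^{n−1}` on block-swapping `σ ∈ S_{2n}`. -/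
def wreathChar (n : ℕ) (σ : Equiv.Perm (Fin (2 * n))) : ℂ :=
  sgnC σ * (if swapsBlocks n σ then (-1 : ℂ) ^ (n - 1) else 1)

/-- The composition product `sgn₂[sgn_n]`: the `S_{2n}`-module induced from the
one-dimensional character `wreathChar` of the wreath product `S_n ≀ S₂`, realized as the
left ideal of `ℂ[S_{2n}]` generated by `Σ_{h ∈ S_n ≀ S₂} χ(h) h`. -/
def compProduct (n : ℕ) : Ideal (GA (2 * n)) :=
  Ideal.span {∑ σ ∈ wreath n, wreathChar n σ • ofP σ}

/-- The partition `2^{n−i} 1^{2i}` of `2n`. -/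
def hookishShape (n i : ℕ) : ℕ → ℕ :=
  fun j => if j < n - i then 2 else if j < n + i then 1 else 0

/-!
Let `e` be the idempotent of `ℂ[S_{2n}]` attached to the character of `S_n ≀ S₂`, so that
`sgn₂[sgn_n] = ℂ[S_{2n}] e`. By Mackey's argument `e ℂ[S_{2n}] e` is spanned by the `e g e` with
`g` running over double coset representatives, and a double coset is determined by
`min(j, n - j)`, where `j` counts the letters of the first block that `g` keeps there. If
`2 j = n` then `e g e = 0`, because `w g w' = g` for some `w`, `w'` with `χ(w) χ(w') = -1`.
Hence `dim e ℂ[S_{2n}] e` is at most the number of odd `i ≤ n`.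

On the other hand, let `c` be the Young symmetrizer of the column-by-column filling of
`2^{n-i} 1^{2i}` with `i` odd. Whenever `q p w = 1` with `q`, `p`, `w` in the column stabilizer,
the row stabilizer and `S_n ≀ S₂`, the signs satisfy `sgn(q) χ(w) = 1`, so the coefficient of `1`
in `c e` does not vanish. For the positive definite involution `g ↦ g⁻¹`, the elements `c e` thus
give nonzero orthogonal idempotents of `e ℂ[S_{2n}] e`, as many as its dimension allows; they
must sum to `e`.
-/

section OrthogonalIdempotents

variable {k A ι : Type*} [Field k] [Ring A] [Algebra k A]

/-- The subspace `e A e` of an algebra `A`. -/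
def corner (k : Type*) {A : Type*} [Field k] [Ring A] [Algebra k A] (e : A) : Submodule k A :=
  LinearMap.range (LinearMap.mulLeftRight k (e, e))

lemma linearIndependent_of_orthogonalIdempotents {E : ι → A} (hE : OrthogonalIdempotents E)
    (hne : ∀ i, E i ≠ 0) : LinearIndependent k E := by
  classical
  rw [linearIndependent_iff']
  intro s c hc i hi
  have hmul : (∑ j ∈ s, c j • E j) * E i = c i • E i := by
    simp [Finset.sum_mul, hE.mul_eq, hi]
  rw [hc, zero_mul] at hmul
  exact (smul_eq_zero.1 hmul.symm).resolve_right (hne i)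

lemma sum_orthogonalIdempotents_eq_of_finrank_corner_le [FiniteDimensional k A] {E : ι → A}
    (hE : OrthogonalIdempotents E) {S : Finset ι} (hne : ∀ i ∈ S, E i ≠ 0) {e : A}
    (he : IsIdempotentElem e) (hl : ∀ i ∈ S, e * E i = E i) (hr : ∀ i ∈ S, E i * e = E i)
    (hdim : Module.finrank k (corner k e) ≤ #S) : ∑ i ∈ S, E i = e := by
  let F : S → A := fun i ↦ E i
  have hF : OrthogonalIdempotents F := hE.embedding (Function.Embedding.subtype _)
  have hspan : Submodule.span k (Set.range F) = corner k e := by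
    refine Submodule.eq_of_le_of_finrank_le ?_ ?_
    · rw [Submodule.span_le]
      rintro _ ⟨i, rfl⟩
      exact ⟨F i, by simp [F, hl i i.2, hr i i.2]⟩
    · rw [finrank_span_eq_card
        (linearIndependent_of_orthogonalIdempotents hF fun i ↦ hne i i.2), Fintype.card_coe]
      exact hdim
  have hmem : e ∈ Submodule.span k (Set.range F) := hspan ▸ ⟨e, by simp [he.eq]⟩
  obtain ⟨c, hc⟩ := (Submodule.mem_span_range_iff_exists_fun k).1 hmem
  have hcoeff (i : S) : c i • F i = F i := by
    classical
    calc c i • F i = (∑ j, c j • F j) * F i := by simp [Finset.sum_mul, hF.mul_eq]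
      _ = F i := by rw [hc]; exact hl i i.2
  calc ∑ i ∈ S, E i = ∑ i, F i := (Finset.sum_coe_sort S E).symm
    _ = ∑ i, c i • F i := by simp only [hcoeff]
    _ = e := hc

lemma mul_eq_ite_of_mem_span_of_orthogonalIdempotents [DecidableEq ι] {E : ι → A}
    (hE : OrthogonalIdempotents E) {j : ι} {y : A} (hy : y ∈ Ideal.span {E j}) (i : ι) :
    y * E i = if j = i then y else 0 := by
  obtain ⟨a, rfl⟩ := Ideal.mem_span_singleton'.1 hy
  rw [mul_assoc, hE.mul_eq]
  split_ifs <;> simp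

lemma iSupIndep_comap_span_of_orthogonalIdempotents {E : ι → A} (hE : OrthogonalIdempotents E)
    (I : Ideal A) : iSupIndep fun i ↦ Submodule.comap I.subtype (Ideal.span {E i}) := by
  classical
  refine iSupIndep_def.2 fun i ↦ ?_
  rw [Submodule.disjoint_def]
  intro y hyi hy
  have hker : ⨆ (j) (_ : j ≠ i), Submodule.comap I.subtype (Ideal.span {E j}) ≤
      LinearMap.ker ((LinearMap.toSpanSingleton A A (E i)) ∘ₗ I.subtype) :=
    iSup₂_le fun j hj z hz ↦ by
      simpa [hj] using mul_eq_ite_of_mem_span_of_orthogonalIdempotents hE hz i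
  have hzero : (y : A) * E i = 0 := by simpa using hker hy
  have hself : (y : A) * E i = y := by
    simpa using mul_eq_ite_of_mem_span_of_orthogonalIdempotents hE hyi i
  exact Subtype.ext (hself.symm.trans hzero)

lemma isInternal_span_of_sum_orthogonalIdempotents_eq [DecidableEq ι] {E : ι → A}
    (hE : OrthogonalIdempotents E) {S : Finset ι} (hS : ∀ i ∉ S, E i = 0) {e : A}
    (hsum : ∑ i ∈ S, E i = e) :
    DirectSum.IsInternal fun i ↦ Submodule.comap (Ideal.span {e}).subtype (Ideal.span {E i}) := by
  have he : IsIdempotentElem e := hsum ▸ hE.isIdempotentElem_sum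
  have mul_e {y : A} (hy : y ∈ Ideal.span {e}) : ∑ i ∈ S, y * E i = y := by
    obtain ⟨a, rfl⟩ := Ideal.mem_span_singleton'.1 hy
    rw [← Finset.mul_sum, hsum, mul_assoc, he.eq]
  have E_mem (i : ι) : E i ∈ Ideal.span {e} := by
    by_cases hi : i ∈ S
    · exact Ideal.mem_span_singleton'.2 ⟨E i, by rw [← hsum]; exact hE.mul_sum_of_mem hi⟩
    · rw [hS i hi]
      exact zero_mem _
  refine DirectSum.isInternal_submodule_of_iSupIndep_of_iSup_eq_top
    (iSupIndep_comap_span_of_orthogonalIdempotents hE _) (eq_top_iff.2 fun y _ ↦ ?_)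
  have hy : y = ∑ i ∈ S, ⟨y * E i, Ideal.mul_mem_left _ _ (E_mem i)⟩ :=
    Subtype.ext (by simpa using (mul_e y.2).symm)
  rw [hy]
  exact Submodule.sum_mem _ fun i _ ↦ Submodule.mem_iSup_of_mem i
    (Ideal.mul_mem_left _ _ (Ideal.mem_span_singleton_self _))

end OrthogonalIdempotents

section RankOne

variable {k A ι : Type*} [Field k] [Ring A] [Algebra k A] [StarRing A]

/-- An involution is proper if `x * star x = 0` only for `x = 0`. This is the only positivity
used for the group algebra. -/
class ProperStar (A : Type*) [Ring A] [StarRing A] : Prop where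
  eq_zero_of_mul_star_self : ∀ x : A, x * star x = 0 → x = 0

/-- Elements `c` for which `c A c*` is contained in the line through `c c*`. In an algebra
with a proper involution the nonzero ones generate minimal left ideals. -/
def IsRankOne (k : Type*) {A : Type*} [Field k] [Ring A] [Algebra k A] [StarRing A] (c : A) :
    Prop :=
  ∀ x, ∃ z : k, c * x * star c = z • (c * star c)

lemma isRankOne_zero : IsRankOne k (0 : A) := fun _ ↦ ⟨0, by simp⟩

variable [ProperStar A] {c : A}

lemma isRankOne_of_forall_exists_smul (d : A) (h : ∀ x, ∃ z : k, c * x * star c = z • d) :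
    IsRankOne k c := by
  intro x
  obtain ⟨z₁, hz₁⟩ := h 1
  rw [mul_one] at hz₁
  rcases eq_or_ne z₁ 0 with rfl | hne
  · rw [zero_smul] at hz₁
    exact ⟨0, by simp [ProperStar.eq_zero_of_mul_star_self c hz₁]⟩
  · obtain ⟨z, hz⟩ := h x
    exact ⟨z / z₁, by rw [hz, hz₁, smul_smul, div_mul_cancel₀ z hne]⟩

lemma isRankOne_mul_of_isSelfAdjoint {a b : A} (ha : IsSelfAdjoint a) (hb : IsSelfAdjoint b)
    (h : ∀ x, ∃ z : k, a * x * b = z • (a * b)) : IsRankOne k (b * a) := by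
  refine isRankOne_of_forall_exists_smul (b * (a * b)) fun x ↦ ?_
  obtain ⟨z, hz⟩ := h (x * a)
  refine ⟨z, ?_⟩
  rw [star_mul, ha.star_eq, hb.star_eq, ← mul_smul_comm, ← hz]
  noncomm_ring

lemma IsRankOne.mul_right (hc : IsRankOne k c) (y : A) : IsRankOne k (c * y) := by
  refine isRankOne_of_forall_exists_smul (c * star c) fun x ↦ ?_
  obtain ⟨z, hz⟩ := hc (y * x * star y)
  exact ⟨z, by rw [← hz, star_mul]; noncomm_ring⟩

lemma IsRankOne.exists_mul_star_mul_self (hc : IsRankOne k c) (hne : c ≠ 0) :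
    ∃ z : k, z ≠ 0 ∧ c * star c * c = z • c := by
  obtain ⟨z, hz⟩ := hc (star c * c)
  have heq : c * star c * c = z • c := by
    refine sub_eq_zero.1 (ProperStar.eq_zero_of_mul_star_self _ ?_)
    have hfactor : c * star c * c - z • c = (c * star c - algebraMap k A z) * c := by
      rw [sub_mul, Algebra.smul_def]
    have hzero : (c * star c * c - z • c) * star c = 0 := by
      rw [sub_mul, smul_mul_assoc, ← hz, sub_eq_zero]
      noncomm_ring
    rw [hfactor, star_mul, ← hfactor, ← mul_assoc, hzero, zero_mul]
  refine ⟨z, ?_, heq⟩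
  rintro rfl
  refine hne (ProperStar.eq_zero_of_mul_star_self _ (ProperStar.eq_zero_of_mul_star_self _ ?_))
  rw [star_mul, star_star, ← mul_assoc, heq, zero_smul, zero_mul]

lemma IsRankOne.exists_isIdempotentElem (hc : IsRankOne k c) :
    ∃ z : k, IsIdempotentElem (z • (star c * c)) ∧
      Ideal.span {z • (star c * c)} = Ideal.span {c} := by
  rcases eq_or_ne c 0 with rfl | hne
  · exact ⟨0, by simp [IsIdempotentElem]⟩
  obtain ⟨z, hz, heq⟩ := hc.exists_mul_star_mul_self hne
  refine ⟨z⁻¹, ?_, le_antisymm ?_ ?_⟩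
  · have hsq : star c * c * (star c * c) = z • (star c * c) := by
      rw [← mul_smul_comm, ← heq]
      noncomm_ring
    rw [IsIdempotentElem, smul_mul_smul_comm, hsq, smul_smul, mul_assoc, inv_mul_cancel₀ hz,
      mul_one]
  · rw [Ideal.span_singleton_le_iff_mem, Ideal.mem_span_singleton']
    exact ⟨z⁻¹ • star c, smul_mul_assoc _ _ _⟩
  · rw [Ideal.span_singleton_le_iff_mem, Ideal.mem_span_singleton']
    exact ⟨c, by rw [mul_smul_comm, ← mul_assoc, heq, smul_smul, inv_mul_cancel₀ hz, one_smul]⟩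

lemma IsRankOne.nonempty_linearEquiv_span_mul (hc : IsRankOne k c) {y : A} (hne : c * y ≠ 0) :
    Nonempty (Ideal.span {c} ≃ₗ[A] Ideal.span {c * y}) := by
  let f : Ideal.span {c} →ₗ[A] A := (LinearMap.toSpanSingleton A A y).domRestrict (Ideal.span {c})
  have hinj : Function.Injective f := by
    rw [injective_iff_map_eq_zero]
    rintro ⟨w, hw⟩ (hwy : w * y = 0)
    obtain ⟨a, rfl⟩ := Ideal.mem_span_singleton'.1 hw
    obtain ⟨z, hz⟩ := hc (y * star y)
    have hz0 : z ≠ 0 := by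
      rintro rfl
      refine hne (ProperStar.eq_zero_of_mul_star_self _ ?_)
      rw [star_mul, ← zero_smul k (c * star c), ← hz]
      noncomm_ring
    have hzero : z • (a * c * star c) = 0 := by
      calc z • (a * c * star c) = a * c * y * (star y * star c) := by
            rw [mul_assoc a, ← mul_smul_comm, ← hz]
            noncomm_ring
        _ = 0 := by rw [hwy, zero_mul]
    refine Subtype.ext (ProperStar.eq_zero_of_mul_star_self _ ?_)
    rw [star_mul, ← mul_assoc, (smul_eq_zero.1 hzero).resolve_left hz0, zero_mul]
  have hrange : LinearMap.range f = Ideal.span {c * y} := by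
    rw [LinearMap.range_domRestrict, Ideal.span, Submodule.map_span, Set.image_singleton]
    rfl
  exact ⟨(LinearEquiv.ofInjective f hinj).trans (LinearEquiv.ofEq _ _ hrange)⟩

lemma isInternal_span_of_isRankOne [DecidableEq ι] [FiniteDimensional k A] {e : A}
    (he : IsStarProjection e) {x : ι → A} (hx : ∀ i, IsRankOne k (x i))
    (hxe : ∀ i, x i * e = x i) (horth : ∀ i j, i ≠ j → x i * star (x j) = 0) {S : Finset ι}
    (hS : ∀ i, x i ≠ 0 ↔ i ∈ S) (hdim : Module.finrank k (corner k e) ≤ #S) :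
    DirectSum.IsInternal fun i ↦ Submodule.comap (Ideal.span {e}).subtype (Ideal.span {x i}) := by
  choose z hidem hspan using fun i ↦ (hx i).exists_isIdempotentElem
  let E : ι → A := fun i ↦ z i • (star (x i) * x i)
  have hE : OrthogonalIdempotents E :=
    ⟨hidem, fun i j hij ↦ by
      calc E i * E j = (z i * z j) • (star (x i) * (x i * star (x j)) * x j) := by
            simp only [E, smul_mul_smul_comm, mul_assoc]
        _ = 0 := by rw [horth i j hij]; simp⟩
  have hEzero (i : ι) : E i = 0 ↔ x i = 0 := by
    rw [← Ideal.span_singleton_eq_bot, hspan, Ideal.span_singleton_eq_bot]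
  have hsum : ∑ i ∈ S, E i = e := by
    refine sum_orthogonalIdempotents_eq_of_finrank_corner_le hE
      (fun i hi ↦ (hEzero i).not.2 ((hS i).2 hi)) he.isIdempotentElem (fun i _ ↦ ?_) (fun i _ ↦ ?_)
      hdim
    · have hstar : e * star (x i) = star (x i) := by
        rw [← he.isSelfAdjoint.star_eq, ← star_mul, hxe]
      rw [mul_smul_comm, ← mul_assoc, hstar]
    · rw [smul_mul_assoc, mul_assoc, hxe]
  have hoff (i : ι) (hi : i ∉ S) : E i = 0 := (hEzero i).2 (not_not.1 ((hS i).not.2 hi))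
  simpa only [E, hspan] using isInternal_span_of_sum_orthogonalIdempotents_eq hE hoff hsum

end RankOne

lemma finrank_span_range_le_card {k V α β : Type*} [Field k] [AddCommGroup V] [Module k V]
    (f : α → V) (t : α → β) {S : Finset β} (hS : ∀ a, f a ≠ 0 → t a ∈ S)
    (ht : ∀ a b, t a = t b → f a ∈ Submodule.span k {f b}) :
    Module.finrank k (Submodule.span k (Set.range f)) ≤ #S := by
  have hgen (b : β) : ∃ v : V, ∀ a, t a = b → f a ∈ Submodule.span k {v} := by
    by_cases hb : ∃ a, t a = b
    · obtain ⟨a, rfl⟩ := hb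
      exact ⟨f a, fun a' ha' ↦ ht a' a ha'⟩
    · exact ⟨0, fun a ha ↦ (hb ⟨a, ha⟩).elim⟩
  choose v hv using hgen
  have hle : Submodule.span k (Set.range f) ≤ Submodule.span k (S.image v : Set V) := by
    rw [Submodule.span_le]
    rintro _ ⟨a, rfl⟩
    by_cases ha : f a = 0
    · rw [ha]
      exact zero_mem _
    · exact Submodule.span_mono (by simpa using ⟨t a, hS a ha, rfl⟩) (hv (t a) a rfl)
  exact (Submodule.finrank_mono hle).trans ((finrank_span_finset_le_card _).trans card_image_le)

section GroupAlgebra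

open MonoidAlgebra

variable {k G : Type*} [RCLike k] [Group G]

/-- The involution of the group algebra `k[G]` conjugating the coefficients and inverting the
group elements. -/
instance : StarRing (MonoidAlgebra k G) where
  star x := .ofCoeff ((x.coeff.equivMapDomain (Equiv.inv G)).mapRange star (star_zero k))
  star_involutive x := coeff_injective <| Finsupp.ext fun g ↦ by simp
  star_add x y := coeff_injective <| Finsupp.ext fun g ↦ by simp
  star_mul x y := coeff_injective <| Finsupp.ext fun g ↦ by
    rw [coeff_mul_apply_right, Finsupp.sum_mapRange_index (by simp),
      Finsupp.equivMapDomain_eq_mapDomain (Equiv.inv G) x.coeff,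
      Finsupp.sum_mapDomain_index_inj (Equiv.inv G).injective]
    simp [coeff_mul_apply_left, Finsupp.sum, mul_comm]

lemma coeff_star (x : MonoidAlgebra k G) (g : G) : (star x).coeff g = star (x.coeff g⁻¹) := rfl

lemma star_of (g : G) : star (of k G g) = of k G g⁻¹ := by
  refine coeff_injective (Finsupp.ext fun h ↦ ?_)
  simp [coeff_star, Finsupp.single_apply, inv_eq_iff_eq_inv, apply_ite star]

instance : StarModule k (MonoidAlgebra k G) :=
  ⟨fun z x ↦ coeff_injective <| Finsupp.ext fun g ↦ by simp [coeff_star]⟩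

instance : ProperStar (MonoidAlgebra k G) where
  eq_zero_of_mul_star_self x hx := by
    have hsum : ∑ g ∈ x.coeff.support, ‖x.coeff g‖ ^ 2 = 0 := by
      have hcoeff := congr_arg (fun y ↦ y.coeff 1) hx
      simp only [coeff_mul_apply_left, coeff_star, Finsupp.sum, mul_one, inv_inv, RCLike.star_def,
        RCLike.mul_conj, coeff_zero, Finsupp.zero_apply] at hcoeff
      exact_mod_cast hcoeff
    refine coeff_injective (Finsupp.ext fun g ↦ by_contra fun hg ↦ hg ?_)
    rw [Finset.sum_eq_zero_iff_of_nonneg fun _ _ ↦ by positivity] at hsum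
    simpa using hsum g (Finsupp.mem_support_iff.2 hg)

/-- A subgroup of `G`, given as a finite set `K`, together with a character `χ` of it with values
in `{1, -1}`. -/
structure IsQuadraticChar (K : Finset G) (χ : G → k) : Prop where
  one_mem : 1 ∈ K
  mul_mem : ∀ g ∈ K, ∀ h ∈ K, g * h ∈ K
  inv_mem : ∀ g ∈ K, g⁻¹ ∈ K
  apply_mul : ∀ g ∈ K, ∀ h ∈ K, χ (g * h) = χ g * χ h
  eq_one_or_neg_one : ∀ g ∈ K, χ g = 1 ∨ χ g = -1

/-- The element `∑ χ(g) g`, the sum over `g ∈ K`, of the group algebra. -/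
def charSum (K : Finset G) (χ : G → k) : MonoidAlgebra k G :=
  ∑ g ∈ K, χ g • of k G g

/-- The idempotent of the group algebra attached to the quadratic character `χ` of `K`. -/
def charIdem (K : Finset G) (χ : G → k) : MonoidAlgebra k G :=
  (#K : k)⁻¹ • charSum K χ

namespace IsQuadraticChar

variable {K : Finset G} {χ : G → k} {g h : G}

lemma apply_mul_self (hχ : IsQuadraticChar K χ) (hg : g ∈ K) : χ g * χ g = 1 := by
  rcases hχ.eq_one_or_neg_one g hg with h | h <;> simp [h]

lemma star_apply (hχ : IsQuadraticChar K χ) (hg : g ∈ K) : star (χ g) = χ g := by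
  rcases hχ.eq_one_or_neg_one g hg with h | h <;> simp [h]

lemma apply_inv (hχ : IsQuadraticChar K χ) (hg : g ∈ K) : χ g⁻¹ = χ g := by
  have hone : χ 1 = 1 := by
    simpa [hχ.apply_mul_self hχ.one_mem] using hχ.apply_mul 1 hχ.one_mem 1 hχ.one_mem
  have hinv : χ g⁻¹ * χ g = 1 := by
    rw [← hχ.apply_mul _ (hχ.inv_mem g hg) g hg, inv_mul_cancel, hone]
  calc χ g⁻¹ = χ g⁻¹ * χ g * χ g := by rw [mul_assoc, hχ.apply_mul_self hg, mul_one]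
    _ = χ g := by rw [hinv, one_mul]

lemma of_mul_charSum (hχ : IsQuadraticChar K χ) (hg : g ∈ K) :
    of k G g * charSum K χ = χ g • charSum K χ := by
  rw [charSum, Finset.mul_sum, Finset.smul_sum]
  refine Finset.sum_equiv (Equiv.mulLeft g) (fun h ↦ ⟨hχ.mul_mem g hg h, fun hh ↦ ?_⟩)
    fun h hh ↦ ?_
  · simpa using hχ.mul_mem _ (hχ.inv_mem g hg) _ hh
  · rw [Equiv.coe_mulLeft, hχ.apply_mul g hg h hh, smul_smul, ← mul_assoc, hχ.apply_mul_self hg,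
      one_mul, mul_smul_comm, map_mul]

lemma isSelfAdjoint_charSum (hχ : IsQuadraticChar K χ) : IsSelfAdjoint (charSum K χ) := by
  rw [IsSelfAdjoint, charSum, star_sum]
  refine Finset.sum_equiv (Equiv.inv G)
    (fun h ↦ ⟨hχ.inv_mem h, fun hh ↦ by simpa using hχ.inv_mem _ hh⟩) fun h hh ↦ ?_
  rw [Equiv.inv_apply, star_smul, star_of, hχ.apply_inv hh, hχ.star_apply hh]

lemma charSum_mul_of (hχ : IsQuadraticChar K χ) (hg : g ∈ K) :
    charSum K χ * of k G g = χ g • charSum K χ := by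
  simpa only [star_mul, star_smul, star_of, inv_inv, hχ.isSelfAdjoint_charSum.star_eq,
    hχ.apply_inv hg, hχ.star_apply hg] using congr_arg star (hχ.of_mul_charSum (hχ.inv_mem g hg))

lemma charSum_mul_charSum (hχ : IsQuadraticChar K χ) :
    charSum K χ * charSum K χ = (#K : k) • charSum K χ := by
  have hterm (g : G) (hg : g ∈ K) : χ g • of k G g * charSum K χ = charSum K χ := by
    rw [smul_mul_assoc, hχ.of_mul_charSum hg, smul_smul, hχ.apply_mul_self hg, one_smul]
  calc charSum K χ * charSum K χ = ∑ g ∈ K, χ g • of k G g * charSum K χ := by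
        rw [← Finset.sum_mul, ← charSum]
    _ = (#K : k) • charSum K χ := by
        rw [Finset.sum_congr rfl hterm, Finset.sum_const, Nat.cast_smul_eq_nsmul]

lemma card_ne_zero (hχ : IsQuadraticChar K χ) : (#K : k) ≠ 0 :=
  Nat.cast_ne_zero.2 (Finset.card_ne_zero_of_mem hχ.one_mem)

lemma isStarProjection_charIdem (hχ : IsQuadraticChar K χ) : IsStarProjection (charIdem K χ) where
  isIdempotentElem := by
    rw [IsIdempotentElem, charIdem, smul_mul_smul_comm, hχ.charSum_mul_charSum, smul_smul,
      inv_mul_cancel_right₀ hχ.card_ne_zero]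
  isSelfAdjoint := by
    rw [IsSelfAdjoint, charIdem, star_smul, hχ.isSelfAdjoint_charSum.star_eq]
    simp

lemma span_charIdem (hχ : IsQuadraticChar K χ) :
    Ideal.span {charIdem K χ} = Ideal.span {charSum K χ} := by
  have hunit : IsUnit (algebraMap k (MonoidAlgebra k G) (#K : k)⁻¹) :=
    (inv_ne_zero hχ.card_ne_zero).isUnit.map _
  rw [charIdem, Algebra.smul_def, Ideal.span_singleton_mul_left_unit hunit]

variable {L : Finset G} {ψ : G → k}

lemma charSum_mul_of_mul_charSum (hχ : IsQuadraticChar K χ) (hψ : IsQuadraticChar L ψ) {p q : G}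
    (hp : p ∈ K) (hq : q ∈ L) (g : G) :
    charSum K χ * of k G (p * g * q) * charSum L ψ =
      (χ p * ψ q) • (charSum K χ * of k G g * charSum L ψ) := by
  calc charSum K χ * of k G (p * g * q) * charSum L ψ
      = charSum K χ * of k G p * of k G g * (of k G q * charSum L ψ) := by
        simp only [map_mul, mul_assoc]
    _ = (χ p * ψ q) • (charSum K χ * of k G g * charSum L ψ) := by
        rw [hχ.charSum_mul_of hp, hψ.of_mul_charSum hq, smul_mul_assoc, smul_mul_smul_comm]

lemma charSum_mul_of_mul_charSum_eq_zero (hχ : IsQuadraticChar K χ) (hψ : IsQuadraticChar L ψ)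
    {p q : G} (hp : p ∈ K) (hq : q ∈ L) (hpq : p * g * q = g) (hne : χ p * ψ q ≠ 1) :
    charSum K χ * of k G g * charSum L ψ = 0 := by
  have h := hχ.charSum_mul_of_mul_charSum hψ hp hq g
  rw [hpq, ← sub_eq_zero] at h
  nth_rw 1 [← one_smul k (charSum K χ * _ * _)] at h
  rw [← sub_smul, smul_eq_zero, sub_eq_zero] at h
  exact h.resolve_left hne.symm

end IsQuadraticChar

lemma of_mul_charSum_mul_of_inv {K K' : Finset G} {χ : G → k} {g : G}
    (hK : ∀ h, h ∈ K ↔ g * h * g⁻¹ ∈ K') (hχ : ∀ h, χ (g * h * g⁻¹) = χ h) :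
    of k G g * charSum K χ * of k G g⁻¹ = charSum K' χ := by
  rw [charSum, Finset.mul_sum, Finset.sum_mul]
  refine Finset.sum_equiv (MulAut.conj g).toEquiv hK fun h _ ↦ ?_
  rw [MulEquiv.toEquiv_eq_coe, MulEquiv.coe_toEquiv, MulAut.conj_apply, hχ, mul_smul_comm,
    smul_mul_assoc, map_mul, map_mul]

lemma charSum_mul_charSum_mul_charSum_ne_zero {K L M : Finset G} {χ ψ ω : G → k} (hK : 1 ∈ K)
    (hL : 1 ∈ L) (hM : 1 ∈ M)
    (h : ∀ p ∈ K, ∀ q ∈ L, ∀ w ∈ M, p * q * w = 1 → χ p * ψ q * ω w = 1) :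
    charSum K χ * charSum L ψ * charSum M ω ≠ 0 := by
  intro hzero
  have hexpand : charSum K χ * charSum L ψ * charSum M ω =
      ∑ x ∈ K ×ˢ L ×ˢ M, (χ x.1 * ψ x.2.1 * ω x.2.2) • of k G (x.1 * x.2.1 * x.2.2) := by
    simp_rw [mul_assoc, charSum, Finset.sum_product, Finset.sum_mul_sum, Finset.mul_sum,
      smul_mul_smul_comm, map_mul]
  have hcoeff : (charSum K χ * charSum L ψ * charSum M ω).coeff 1 =
      (#{x ∈ K ×ˢ L ×ˢ M | x.1 * x.2.1 * x.2.2 = 1} : k) := by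
    rw [hexpand, Finset.natCast_card_filter, coeff_sum, Finsupp.finsetSum_apply]
    refine Finset.sum_congr rfl fun x hx ↦ ?_
    obtain ⟨hp, hq, hw⟩ : x.1 ∈ K ∧ x.2.1 ∈ L ∧ x.2.2 ∈ M := by simpa using hx
    rw [coeff_smul_apply, of_apply, coeff_single, Finsupp.single_apply, smul_eq_mul, mul_ite,
      mul_one, mul_zero]
    split_ifs with hx_one
    · exact h _ hp _ hq _ hw hx_one
    · rfl
  rw [hzero, coeff_zero, Finsupp.zero_apply] at hcoeff
  refine Finset.card_ne_zero_of_mem (a := (1, 1, 1)) ?_ (Nat.cast_eq_zero.1 hcoeff.symm)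
  simp [hK, hL, hM]

lemma span_range_of : Submodule.span k (Set.range (of k G)) = ⊤ := by
  refine eq_top_iff.2 fun x _ ↦ ?_
  induction x using MonoidAlgebra.induction_on with
  | of g => exact Submodule.subset_span ⟨g, rfl⟩
  | add x y hx hy => exact add_mem (hx trivial) (hy trivial)
  | smul z x hx => exact Submodule.smul_mem _ z (hx trivial)

lemma corner_eq_span (e : MonoidAlgebra k G) :
    corner k e = Submodule.span k (Set.range fun g ↦ e * of k G g * e) := by
  rw [corner, LinearMap.range_eq_map, ← span_range_of, LinearMap.map_span, ← Set.range_comp]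
  rfl

lemma IsQuadraticChar.corner_charIdem {K : Finset G} {χ : G → k} (hχ : IsQuadraticChar K χ) :
    corner k (charIdem K χ) =
      Submodule.span k (Set.range fun g ↦ charSum K χ * of k G g * charSum K χ) := by
  have hne : (#K : k)⁻¹ * (#K : k)⁻¹ ≠ 0 := mul_ne_zero_iff.2
    ⟨inv_ne_zero hχ.card_ne_zero, inv_ne_zero hχ.card_ne_zero⟩
  have hscale : LinearMap.mulLeftRight k (charIdem K χ, charIdem K χ) =
      ((#K : k)⁻¹ * (#K : k)⁻¹) • LinearMap.mulLeftRight k (charSum K χ, charSum K χ) := by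
    ext x
    simp [charIdem, smul_smul]
  rw [← corner_eq_span, corner, corner, hscale, LinearMap.range_smul _ _ hne]

lemma exists_mul_mul_eq_smul {a b d : MonoidAlgebra k G}
    (h : ∀ g : G, ∃ z : k, a * of k G g * b = z • d) (x : MonoidAlgebra k G) :
    ∃ z : k, a * x * b = z • d := by
  have hx : x ∈ Submodule.span k (Set.range (of k G)) := by
    rw [span_range_of]
    trivial
  induction hx using Submodule.span_induction with
  | mem x hx =>
    obtain ⟨g, rfl⟩ := hx
    exact h g
  | zero => exact ⟨0, by simp⟩
  | add x y _ _ hx hy =>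
    obtain ⟨z, hz⟩ := hx
    obtain ⟨w, hw⟩ := hy
    exact ⟨z + w, by rw [mul_add, add_mul, hz, hw, add_smul]⟩
  | smul z x _ hx =>
    obtain ⟨w, hw⟩ := hx
    exact ⟨z * w, by rw [mul_smul_comm, smul_mul_assoc, hw, mul_smul]⟩

lemma mul_mul_eq_zero_of_forall_of {a b : MonoidAlgebra k G} (h : ∀ g : G, a * of k G g * b = 0)
    (x : MonoidAlgebra k G) : a * x * b = 0 := by
  obtain ⟨z, hz⟩ := exists_mul_mul_eq_smul (d := 0) (fun g ↦ ⟨0, by rw [h g, smul_zero]⟩) x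
  rw [hz, smul_zero]

end GroupAlgebra

section Tableaux

open MonoidAlgebra

lemma exists_perm_comp_eq {α β : Type*} [Fintype α] [DecidableEq β] (f g : α → β)
    (h : ∀ b, #{x | f x = b} = #{x | g x = b}) : ∃ p : Perm α, ∀ x, g (p x) = f x := by
  have hcard (b : β) : Fintype.card {x // f x = b} = Fintype.card {x // g x = b} := by
    rw [Fintype.card_subtype, Fintype.card_subtype, h b]
  exact ⟨Equiv.ofFiberEquiv fun b ↦ Fintype.equivOfCardEq (hcard b),
    Equiv.ofFiberEquiv_map _⟩

lemma exists_perm_iff_and_iff {α : Type*} [Fintype α] {p q p' q' : α → Prop} [DecidablePred p]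
    [DecidablePred q] [DecidablePred p'] [DecidablePred q']
    (hp : #{x | p x} = #{x | p' x}) (hq : #{x | q x} = #{x | q' x})
    (hpq : #{x | p x ∧ q x} = #{x | p' x ∧ q' x}) :
    ∃ g : Perm α, (∀ x, p' (g x) ↔ p x) ∧ ∀ x, q' (g x) ↔ q x := by
  have hrow (p q : α → Prop) [DecidablePred p] [DecidablePred q] :
        #{x | p x ∧ q x} + #{x | p x ∧ ¬ q x} = #{x | p x} := by
    rw [← filter_filter, ← filter_filter, card_filter_add_card_filter_not]
  have hcol (p q : α → Prop) [DecidablePred p] [DecidablePred q] :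
        #{x | p x ∧ q x} + #{x | ¬ p x ∧ q x} = #{x | q x} := by
    simpa only [and_comm] using hrow q p
  have hnot (p : α → Prop) [DecidablePred p] : #{x | p x} + #{x | ¬ p x} = Fintype.card α :=
    card_filter_add_card_filter_not p
  have hp_not : #{x | p x ∧ ¬ q x} = #{x | p' x ∧ ¬ q' x} := by
    linarith [hrow p q, hrow p' q']
  have h_not_q : #{x | ¬ p x ∧ q x} = #{x | ¬ p' x ∧ q' x} := by
    linarith [hcol p q, hcol p' q']
  have h_not_not : #{x | ¬ p x ∧ ¬ q x} = #{x | ¬ p' x ∧ ¬ q' x} := by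
    linarith [hrow (fun x ↦ ¬ p x) q, hrow (fun x ↦ ¬ p' x) q', hnot p, hnot p']
  obtain ⟨g, hg⟩ := exists_perm_comp_eq (fun x ↦ (p x, q x)) (fun x ↦ (p' x, q' x)) fun ⟨P, Q⟩ ↦ by
    by_cases P <;> by_cases Q <;> simp_all only [Prod.mk.injEq, eq_iff_iff, iff_true, iff_false]
  exact ⟨g, fun x ↦ (congr_arg Prod.fst (hg x)).to_iff, fun x ↦ (congr_arg Prod.snd (hg x)).to_iff⟩

variable {N : ℕ}

lemma sgnC_mul (σ τ : Perm (Fin N)) : sgnC (σ * τ) = sgnC σ * sgnC τ := by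
  simp [sgnC]

lemma sgnC_eq_one_or_neg_one (σ : Perm (Fin N)) : sgnC σ = 1 ∨ sgnC σ = -1 := by
  rcases Int.units_eq_one_or (Perm.sign σ) with h | h <;> simp [sgnC, h]

lemma mem_stab {h : Fin N → ℕ} {σ : Perm (Fin N)} : σ ∈ stab h ↔ ∀ x, h (σ x) = h x := by
  simp [stab]

lemma isQuadraticChar_stab (h : Fin N → ℕ) {χ : Perm (Fin N) → ℂ}
    (hmul : ∀ σ τ, χ (σ * τ) = χ σ * χ τ) (hχ : ∀ σ, χ σ = 1 ∨ χ σ = -1) :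
    IsQuadraticChar (stab h) χ where
  one_mem := mem_stab.2 fun _ ↦ rfl
  mul_mem σ hσ τ hτ := mem_stab.2 fun x ↦ by
    rw [Perm.mul_apply, mem_stab.1 hσ, mem_stab.1 hτ]
  inv_mem σ hσ := mem_stab.2 fun x ↦ by
    simpa using (mem_stab.1 hσ (σ⁻¹ x)).symm
  apply_mul σ _ τ _ := hmul σ τ
  eq_one_or_neg_one σ _ := hχ σ

/-- The row symmetrizer `∑ p`, the sum over the row stabilizer. -/
def rowSym (row : Fin N → ℕ) : GA N := charSum (stab row) 1

/-- The column antisymmetrizer `∑ sgn(q) q`, the sum over the column stabilizer. -/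
def colAntisym (col : Fin N → ℕ) : GA N := charSum (stab col) sgnC

lemma youngSym_eq (row col : Fin N → ℕ) : youngSym row col = colAntisym col * rowSym row := by
  simp [youngSym, colAntisym, rowSym, charSum, ofP]

lemma isQuadraticChar_rowStab (row : Fin N → ℕ) :
    IsQuadraticChar (stab row) (1 : Perm (Fin N) → ℂ) :=
  isQuadraticChar_stab row (by simp) (by simp)

lemma isQuadraticChar_colStab (col : Fin N → ℕ) : IsQuadraticChar (stab col) sgnC :=
  isQuadraticChar_stab col sgnC_mul sgnC_eq_one_or_neg_one

lemma isSelfAdjoint_rowSym (row : Fin N → ℕ) : IsSelfAdjoint (rowSym row) :=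
  (isQuadraticChar_rowStab row).isSelfAdjoint_charSum

lemma isSelfAdjoint_colAntisym (col : Fin N → ℕ) : IsSelfAdjoint (colAntisym col) :=
  (isQuadraticChar_colStab col).isSelfAdjoint_charSum

variable {f : ℕ → ℕ} {row col row' col' : Fin N → ℕ}

lemma of_mul_youngSym_mul_of_inv {g : Perm (Fin N)} (hrow : ∀ x, row' (g x) = row x)
    (hcol : ∀ x, col' (g x) = col x) :
    of ℂ _ g * youngSym row col * of ℂ _ g⁻¹ = youngSym row' col' := by
  have hstab {h h' : Fin N → ℕ} (hh : ∀ x, h' (g x) = h x) (σ : Perm (Fin N)) :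
      σ ∈ stab h ↔ g * σ * g⁻¹ ∈ stab h' := by
    rw [mem_stab, mem_stab, ← g.forall_congr_right (q := fun x ↦ h' ((g * σ * g⁻¹) x) = h' x)]
    simp [hh]
  have hsgn (σ : Perm (Fin N)) : sgnC (g * σ * g⁻¹) = sgnC σ := by
    simp [sgnC, mul_right_comm]
  have hone : of ℂ _ g⁻¹ * of ℂ _ g = 1 := by rw [← map_mul, inv_mul_cancel, map_one]
  rw [youngSym_eq, youngSym_eq, colAntisym, colAntisym, rowSym, rowSym,
    ← of_mul_charSum_mul_of_inv (hstab hrow) (fun _ ↦ rfl),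
    ← of_mul_charSum_mul_of_inv (hstab hcol) hsgn]
  calc of ℂ _ g * (charSum (stab col) sgnC * charSum (stab row) 1) * of ℂ _ g⁻¹
      = of ℂ _ g * charSum (stab col) sgnC * (of ℂ _ g⁻¹ * of ℂ _ g) * charSum (stab row) 1 *
          of ℂ _ g⁻¹ := by rw [hone]; noncomm_ring
    _ = _ := by noncomm_ring

lemma rowSym_mul_of_mul_colAntisym_eq_zero {σ : Perm (Fin N)}
    (h : ¬ Function.Injective fun x ↦ (row x, col (σ⁻¹ x))) :
    rowSym row * of ℂ _ σ * colAntisym col = 0 := by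
  have hswap {h : Fin N → ℕ} {u v : Fin N} (huv : h u = h v) : swap u v ∈ stab h :=
    mem_stab.2 (apply_swap_eq_self huv)
  simp only [Function.Injective, Prod.mk.injEq, not_forall] at h
  obtain ⟨u, v, ⟨hrow, hcol⟩, huv⟩ := h
  have hfix : swap u v * σ * swap (σ⁻¹ u) (σ⁻¹ v) = σ := by
    rw [swap_mul_eq_mul_swap, mul_assoc, swap_mul_self, mul_one]
  refine (isQuadraticChar_rowStab row).charSum_mul_of_mul_charSum_eq_zero
    (isQuadraticChar_colStab col) (hswap hrow) (hswap hcol) hfix ?_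
  norm_num [sgnC, Perm.sign_swap, huv]

lemma card_lt_eq_sum (row k : Fin N → ℕ) (c : ℕ) :
    #{x | k x < c} = ∑ r ∈ univ.image row, #{x | row x = r ∧ k x < c} := by
  rw [card_eq_sum_card_fiberwise fun x _ ↦ mem_image_of_mem row (mem_univ x)]
  simp only [filter_filter, and_comm]

lemma card_cell (row k : Fin N → ℕ) (r c : ℕ) : #{x | (row x, k x) = (r, c)} =
    #{x | row x = r ∧ k x < c + 1} - #{x | row x = r ∧ k x < c} := by
  rw [← card_sdiff_of_subset fun x hx ↦ ?_]
  · congr 1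
    ext x
    simp only [mem_filter_univ, mem_sdiff, Prod.mk.injEq]
    omega
  · simp only [mem_filter_univ] at hx ⊢
    omega

namespace IsTableau

lemma card_row_col_lt (h : IsTableau f row col) (r c : ℕ) :
    #{x | row x = r ∧ col x < c} = min (f r) c := by
  have himage : ({x | row x = r ∧ col x < c} : Finset (Fin N)).image col = range (min (f r) c) := by
    ext d
    simp only [mem_image, mem_filter_univ, mem_range, lt_min_iff, ← h.2 r d]
    aesop
  rw [← card_range (min (f r) c), ← himage, card_image_of_injOn]
  intro x hx y hy hxy
  simp only [coe_filter, mem_univ, true_and, Set.mem_ofPred_eq] at hx hy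
  exact h.1 (Prod.ext (hx.1.trans hy.1.symm) hxy)

variable {k : Fin N → ℕ}

lemma card_row_lt_le (h : IsTableau f row col) (hk : Function.Injective fun x ↦ (row x, k x))
    (r c : ℕ) : #{x | row x = r ∧ k x < c} ≤ #{x | row x = r ∧ col x < c} := by
  rw [h.card_row_col_lt, le_min_iff]
  constructor
  · rw [← min_self (f r), ← h.card_row_col_lt]
    refine card_le_card fun x hx ↦ ?_
    simp only [mem_filter_univ] at hx ⊢
    exact ⟨hx.1, (h.2 r _).1 ⟨x, hx.1, rfl⟩⟩
  · rw [← card_range c]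
    refine card_le_card_of_injOn k (fun x hx ↦ ?_) fun x hx y hy hxy ↦ ?_
    · simp_all
    · simp only [coe_filter, mem_univ, true_and, Set.mem_ofPred_eq] at hx hy
      exact hk (Prod.ext (hx.1.trans hy.1.symm) hxy)

lemma card_lt_le (h : IsTableau f row col) (hk : Function.Injective fun x ↦ (row x, k x))
    (c : ℕ) : #{x | k x < c} ≤ #{x | col x < c} := by
  rw [card_lt_eq_sum row, card_lt_eq_sum row]
  exact sum_le_sum fun r _ ↦ h.card_row_lt_le hk r c

lemma exists_mem_stab_comp_eq (h : IsTableau f row col)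
    (hk : Function.Injective fun x ↦ (row x, k x))
    (hcard : ∀ c, #{x | k x < c} = #{x | col x < c}) : ∃ p ∈ stab row, ∀ x, k (p x) = col x := by
  have hlt (r c : ℕ) : #{x | row x = r ∧ k x < c} = #{x | row x = r ∧ col x < c} := by
    by_cases hr : r ∈ univ.image row
    · have hsum := hcard c
      rw [card_lt_eq_sum row, card_lt_eq_sum row] at hsum
      exact (sum_eq_sum_iff_of_le fun r _ ↦ h.card_row_lt_le hk r c).1 hsum r hr
    · have hne (x : Fin N) : row x ≠ r := by simpa using hr ∘ (mem_image.2 ⟨x, mem_univ x, ·⟩)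
      simp [hne]
  obtain ⟨p, hp⟩ := exists_perm_comp_eq (fun x ↦ (row x, col x)) (fun x ↦ (row x, k x))
    fun ⟨r, c⟩ ↦ by rw [card_cell, card_cell, hlt, hlt]
  exact ⟨p, mem_stab.2 fun x ↦ congr_arg Prod.fst (hp x), fun x ↦ congr_arg Prod.snd (hp x)⟩

lemma exists_perm (h : IsTableau f row col) (h' : IsTableau f row' col') :
    ∃ g : Perm (Fin N), (∀ x, row' (g x) = row x) ∧ ∀ x, col' (g x) = col x := by
  obtain ⟨g, hg⟩ := exists_perm_comp_eq (fun x ↦ (row x, col x)) (fun x ↦ (row' x, col' x))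
    fun ⟨r, c⟩ ↦ by simp only [card_cell, h.card_row_col_lt, h'.card_row_col_lt]
  exact ⟨g, fun x ↦ congr_arg Prod.fst (hg x), fun x ↦ congr_arg Prod.snd (hg x)⟩

lemma rowSym_mul_mul_colAntisym (h : IsTableau f row col) (x : GA N) :
    ∃ z : ℂ, rowSym row * x * colAntisym col = z • (rowSym row * colAntisym col) := by
  refine exists_mul_mul_eq_smul (fun σ ↦ ?_) x
  by_cases hσ : Function.Injective fun x ↦ (row x, col (σ⁻¹ x))
  · obtain ⟨p, hp, hcol⟩ := h.exists_mem_stab_comp_eq hσ fun c ↦ card_equiv σ⁻¹ (by simp)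
    have hq : p⁻¹ * σ ∈ stab col := mem_stab.2 fun x ↦ by
      simpa using (hcol (p⁻¹ (σ x))).symm
    have hfactor : of ℂ _ σ = of ℂ _ (p * 1 * (p⁻¹ * σ)) := by simp
    rw [hfactor, rowSym, colAntisym, (isQuadraticChar_rowStab row).charSum_mul_of_mul_charSum
      (isQuadraticChar_colStab col) hp hq, map_one, mul_one]
    exact ⟨_, rfl⟩
  · exact ⟨0, by rw [rowSym_mul_of_mul_colAntisym_eq_zero hσ, zero_smul]⟩

lemma isRankOne_youngSym (h : IsTableau f row col) : IsRankOne ℂ (youngSym row col) := by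
  rw [youngSym_eq]
  exact isRankOne_mul_of_isSelfAdjoint (isSelfAdjoint_rowSym row) (isSelfAdjoint_colAntisym col)
    h.rowSym_mul_mul_colAntisym

lemma rowSym_mul_mul_colAntisym_eq_zero (h : IsTableau f row col) {c : ℕ}
    (hc : #{x | col x < c} < #{x | col' x < c}) (x : GA N) :
    rowSym row * x * colAntisym col' = 0 := by
  refine mul_mul_eq_zero_of_forall_of (fun σ ↦ rowSym_mul_of_mul_colAntisym_eq_zero fun hσ ↦ ?_) x
  refine hc.not_ge (le_trans (card_equiv σ (by simp)).le (h.card_lt_le hσ c))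

lemma youngSym_mul_mul_star_youngSym_eq_zero (h : IsTableau f row col) {f' : ℕ → ℕ}
    (h' : IsTableau f' row' col') {c : ℕ} (hc : #{x | col x < c} ≠ #{x | col' x < c}) (x : GA N) :
    youngSym row col * x * star (youngSym row' col') = 0 := by
  wlog hlt : #{x | col x < c} < #{x | col' x < c} generalizing f f' row col row' col' x
  · rw [← star_eq_zero]
    simpa only [star_mul, star_star, mul_assoc] using
      this h' h hc.symm (star x) (lt_of_le_of_ne (not_lt.1 hlt) hc.symm)
  rw [youngSym_eq, youngSym_eq, star_mul, (isSelfAdjoint_rowSym row').star_eq,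
    (isSelfAdjoint_colAntisym col').star_eq]
  calc colAntisym col * rowSym row * x * (rowSym row' * colAntisym col')
      = colAntisym col * (rowSym row * (x * rowSym row') * colAntisym col') := by noncomm_ring
    _ = 0 := by rw [h.rowSym_mul_mul_colAntisym_eq_zero hlt, mul_zero]

end IsTableau

end Tableaux

section Wreath

open MonoidAlgebra

variable {n : ℕ} {σ τ : Perm (Fin (2 * n))}

lemma presBlocks.mul (hσ : presBlocks n σ) (hτ : presBlocks n τ) : presBlocks n (σ * τ) :=
  fun x ↦ (hσ (τ x)).trans (hτ x)

lemma presBlocks.mul_swapsBlocks (hσ : presBlocks n σ) (hτ : swapsBlocks n τ) :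
    swapsBlocks n (σ * τ) :=
  fun x ↦ (hσ (τ x)).trans (hτ x)

lemma swapsBlocks.mul_presBlocks (hσ : swapsBlocks n σ) (hτ : presBlocks n τ) :
    swapsBlocks n (σ * τ) :=
  fun x ↦ (hσ (τ x)).trans (by simpa only [not_lt] using (hτ x).not)

lemma swapsBlocks.mul (hσ : swapsBlocks n σ) (hτ : swapsBlocks n τ) : presBlocks n (σ * τ) :=
  fun x ↦ (hσ (τ x)).trans (by simpa only [not_lt, not_le] using (hτ x).not)

lemma presBlocks.inv (hσ : presBlocks n σ) : presBlocks n σ⁻¹ :=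
  fun x ↦ by simpa using (hσ (σ⁻¹ x)).symm

lemma swapsBlocks.inv (hσ : swapsBlocks n σ) : swapsBlocks n σ⁻¹ :=
  fun x ↦ by simpa using (hσ (σ⁻¹ x)).not.symm

lemma presBlocks.not_swapsBlocks (hn : 1 ≤ n) (hσ : presBlocks n σ) : ¬ swapsBlocks n σ := by
  intro hσ'
  have hpres := hσ ⟨0, by omega⟩
  have hswap := hσ' ⟨0, by omega⟩
  simp only at hpres hswap
  omega

lemma swapsBlocks_revPerm : swapsBlocks n Fin.revPerm := fun x ↦ by
  simp only [Fin.revPerm_apply, Fin.val_rev]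
  omega

lemma mem_wreath : σ ∈ wreath n ↔ presBlocks n σ ∨ swapsBlocks n σ := by
  simp [wreath]

lemma presBlocks.mem_wreath (hσ : presBlocks n σ) : σ ∈ wreath n := _root_.mem_wreath.2 (.inl hσ)

lemma swapsBlocks.mem_wreath (hσ : swapsBlocks n σ) : σ ∈ wreath n := _root_.mem_wreath.2 (.inr hσ)

lemma presBlocks.wreathChar_eq (hn : 1 ≤ n) (hσ : presBlocks n σ) :
    wreathChar n σ = sgnC σ := by
  rw [wreathChar, if_neg (hσ.not_swapsBlocks hn), mul_one]

lemma swapsBlocks.wreathChar_eq (hσ : swapsBlocks n σ) :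
    wreathChar n σ = sgnC σ * (-1) ^ (n - 1) := by
  rw [wreathChar, if_pos hσ]

lemma wreathChar_mul (hn : 1 ≤ n) (hσ : σ ∈ wreath n) (hτ : τ ∈ wreath n) :
    wreathChar n (σ * τ) = wreathChar n σ * wreathChar n τ := by
  rcases mem_wreath.1 hσ with hσ | hσ <;> rcases mem_wreath.1 hτ with hτ | hτ
  · rw [(hσ.mul hτ).wreathChar_eq hn, hσ.wreathChar_eq hn, hτ.wreathChar_eq hn, sgnC_mul]
  · rw [(hσ.mul_swapsBlocks hτ).wreathChar_eq, hσ.wreathChar_eq hn, hτ.wreathChar_eq, sgnC_mul,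
      mul_assoc]
  · rw [(hσ.mul_presBlocks hτ).wreathChar_eq, hσ.wreathChar_eq, hτ.wreathChar_eq hn, sgnC_mul,
      mul_right_comm]
  · rw [(hσ.mul hτ).wreathChar_eq hn, hσ.wreathChar_eq, hτ.wreathChar_eq, sgnC_mul,
      mul_mul_mul_comm, ← mul_pow, neg_one_mul, neg_neg, one_pow, mul_one]

lemma wreathChar_eq_one_or_neg_one (σ : Perm (Fin (2 * n))) :
    wreathChar n σ = 1 ∨ wreathChar n σ = -1 := by
  rw [wreathChar]
  split_ifs
  · rcases sgnC_eq_one_or_neg_one σ with h | h <;>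
      rcases neg_one_pow_eq_or ℂ (n - 1) with h' | h' <;> simp [h, h']
  · simpa using sgnC_eq_one_or_neg_one σ

lemma isQuadraticChar_wreath (hn : 1 ≤ n) : IsQuadraticChar (wreath n) (wreathChar n) where
  one_mem := presBlocks.mem_wreath fun _ ↦ Iff.rfl
  mul_mem σ hσ τ hτ := by
    rcases mem_wreath.1 hσ with hσ | hσ <;> rcases mem_wreath.1 hτ with hτ | hτ
    · exact (hσ.mul hτ).mem_wreath
    · exact (hσ.mul_swapsBlocks hτ).mem_wreath
    · exact (hσ.mul_presBlocks hτ).mem_wreath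
    · exact (hσ.mul hτ).mem_wreath
  inv_mem σ hσ := (mem_wreath.1 hσ).elim (·.inv.mem_wreath) (·.inv.mem_wreath)
  apply_mul σ hσ τ hτ := wreathChar_mul hn hσ hτ
  eq_one_or_neg_one σ _ := wreathChar_eq_one_or_neg_one σ

/-- The number of letters of the first block that `σ` keeps in the first block: an invariant of
the double coset of `σ` modulo the block-preserving permutations. -/
def innerCount (n : ℕ) (σ : Perm (Fin (2 * n))) : ℕ :=
  #{x : Fin (2 * n) | (x : ℕ) < n ∧ (σ x : ℕ) < n}

lemma card_val_lt : #{x : Fin (2 * n) | (x : ℕ) < n} = n := by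
  rw [Fin.card_filter_val_lt, min_eq_right (by omega)]

lemma card_val_apply_lt (σ : Perm (Fin (2 * n))) : #{x : Fin (2 * n) | (σ x : ℕ) < n} = n :=
  (card_equiv σ (by simp)).trans card_val_lt

lemma swapsBlocks.innerCount_mul_add (hτ : swapsBlocks n τ) (σ : Perm (Fin (2 * n))) :
    innerCount n (τ * σ) + innerCount n σ = n := by
  have hiff (x : Fin (2 * n)) : ((τ * σ) x : ℕ) < n ↔ ¬ (σ x : ℕ) < n := by
    rw [Perm.mul_apply, hτ (σ x), not_lt]
  simp only [innerCount, hiff]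
  rw [add_comm, ← filter_filter, ← filter_filter, card_filter_add_card_filter_not, card_val_lt]

lemma exists_presBlocks_mul_mul_eq (h : innerCount n σ = innerCount n τ) :
    ∃ w w', presBlocks n w ∧ presBlocks n w' ∧ w * σ * w' = τ := by
  obtain ⟨g, hg, hg'⟩ := exists_perm_iff_and_iff
    (p := fun x : Fin (2 * n) ↦ (x : ℕ) < n) (p' := fun x : Fin (2 * n) ↦ (x : ℕ) < n)
    (q := fun x ↦ (σ x : ℕ) < n) (q' := fun x ↦ (τ x : ℕ) < n) rfl
    ((card_val_apply_lt σ).trans (card_val_apply_lt τ).symm) h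
  refine ⟨τ * g * σ⁻¹, g⁻¹, fun x ↦ ?_, presBlocks.inv hg, by group⟩
  simpa using hg' (σ⁻¹ x)

/-- The invariant of the double coset of `σ` modulo the wreath product. -/
def foldedCount (n : ℕ) (σ : Perm (Fin (2 * n))) : ℕ :=
  min (innerCount n σ) (n - innerCount n σ)

lemma exists_mem_wreath_mul_mul_eq (h : foldedCount n σ = foldedCount n τ) :
    ∃ w ∈ wreath n, ∃ w' ∈ wreath n, w * σ * w' = τ := by
  have hσ := swapsBlocks_revPerm.innerCount_mul_add σ
  have hτ := swapsBlocks_revPerm.innerCount_mul_add τ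
  rw [foldedCount, foldedCount] at h
  have hcases : innerCount n σ = innerCount n τ ∨
      innerCount n (Fin.revPerm * σ) = innerCount n τ := by omega
  rcases hcases with heq | heq
  · obtain ⟨w, w', hw, hw', hmul⟩ := exists_presBlocks_mul_mul_eq heq
    exact ⟨w, hw.mem_wreath, w', hw'.mem_wreath, hmul⟩
  · obtain ⟨w, w', hw, hw', hmul⟩ := exists_presBlocks_mul_mul_eq heq
    exact ⟨w * Fin.revPerm, (hw.mul_swapsBlocks swapsBlocks_revPerm).mem_wreath, w',
      hw'.mem_wreath, hmul⟩

lemma charSum_wreath_mul_of_mul_charSum_wreath_eq_zero (hn : 1 ≤ n)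
    (h : 2 * innerCount n σ = n) :
    charSum (wreath n) (wreathChar n) * of ℂ _ σ * charSum (wreath n) (wreathChar n) = 0 := by
  have hrev := swapsBlocks_revPerm.innerCount_mul_add σ
  obtain ⟨w, w', hw, hw', hmul⟩ :=
    exists_presBlocks_mul_mul_eq (σ := Fin.revPerm * σ) (τ := σ) (by omega)
  have hswap := hw.mul_swapsBlocks swapsBlocks_revPerm
  refine (isQuadraticChar_wreath hn).charSum_mul_of_mul_charSum_eq_zero
    (isQuadraticChar_wreath hn) hswap.mem_wreath hw'.mem_wreath hmul ?_
  have hsgn : sgnC (w * Fin.revPerm) * sgnC w' = 1 := by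
    have hsgn := congr_arg sgnC hmul
    rw [← mul_assoc, sgnC_mul, sgnC_mul, mul_right_comm] at hsgn
    refine mul_right_cancel₀ ?_ (hsgn.trans (one_mul _).symm)
    rcases sgnC_eq_one_or_neg_one σ with h | h <;> simp [h]
  have hodd : Odd (n - 1) := ⟨innerCount n σ - 1, by omega⟩
  rw [hswap.wreathChar_eq, hw'.wreathChar_eq hn, mul_right_comm, hsgn, hodd.neg_one_pow]
  norm_num

lemma finrank_corner_wreath_le (hn : 1 ≤ n) :
    Module.finrank ℂ (corner ℂ (charIdem (wreath n) (wreathChar n))) ≤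
      #{i ∈ range (n + 1) | Odd i} := by
  have hW := isQuadraticChar_wreath hn
  rw [hW.corner_charIdem]
  refine finrank_span_range_le_card _ (fun σ ↦ 2 * foldedCount n σ + 1) (fun σ hσ ↦ ?_)
    fun σ τ h ↦ ?_
  · have hhalf : 2 * innerCount n σ ≠ n := fun h ↦ hσ <| by
      rw [charSum_wreath_mul_of_mul_charSum_wreath_eq_zero hn h]
    rw [mem_filter, mem_range, foldedCount]
    exact ⟨by omega, odd_two_mul_add_one _⟩
  · obtain ⟨w, hw, w', hw', rfl⟩ :=
      exists_mem_wreath_mul_mul_eq (σ := τ) (τ := σ) (by simpa using h.symm)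
    rw [hW.charSum_mul_of_mul_charSum hW hw hw']
    exact Submodule.smul_mem _ _ (Submodule.mem_span_singleton_self _)

end Wreath

section HookishShape

open MonoidAlgebra

variable {n i : ℕ}

/-- The row function of the tableau of shape `2^{n-i} 1^{2i}` filled column by column. -/
def rowT (n i : ℕ) (x : Fin (2 * n)) : ℕ := if (x : ℕ) < n + i then x else x - (n + i)

/-- The column function of the tableau of shape `2^{n-i} 1^{2i}` filled column by column. -/
def colT (n i : ℕ) (x : Fin (2 * n)) : ℕ := if (x : ℕ) < n + i then 0 else 1

lemma isTableau_hookishShape (hi : i ≤ n) :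
    IsTableau (hookishShape n i) (rowT n i) (colT n i) := by
  constructor
  · intro x y h
    simp only [rowT, colT, Prod.mk.injEq] at h
    obtain ⟨hrow, hcol⟩ := h
    ext
    split_ifs at hrow hcol <;> omega
  · intro r c
    simp only [hookishShape]
    constructor
    · rintro ⟨x, rfl, rfl⟩
      simp only [rowT, colT]
      split_ifs <;> omega
    · intro h
      have hlt : (if c = 0 then r else n + i + r) < 2 * n := by
        split_ifs at h ⊢ <;> omega
      refine ⟨⟨_, hlt⟩, ?_, ?_⟩
      all_goals
        simp only [rowT, colT]
        split_ifs at h ⊢ <;> omega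

lemma colT_lt_one {x : Fin (2 * n)} : colT n i x < 1 ↔ (x : ℕ) < n + i := by
  rw [colT]
  split_ifs <;> omega

lemma card_colT_lt_one (hi : i ≤ n) : #{x | colT n i x < 1} = n + i := by
  rw [filter_congr fun x _ ↦ colT_lt_one, Fin.card_filter_val_lt, min_eq_right (by omega)]

lemma val_apply_of_mem_stab_rowT {p : Perm (Fin (2 * n))} (hp : p ∈ stab (rowT n i))
    (x : Fin (2 * n)) : (p x : ℕ) = x ∨ (p x : ℕ) = n + i + x ∨ (x : ℕ) = n + i + p x := by
  have hx := mem_stab.1 hp x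
  rw [rowT, rowT] at hx
  split_ifs at hx <;> omega

lemma eq_one_of_mem_stab_rowT {p : Perm (Fin (2 * n))} (hp : p ∈ stab (rowT n i))
    (hlow : ∀ x : Fin (2 * n), (x : ℕ) < n - i → (p x : ℕ) < n + i) : p = 1 := by
  have hfix (x : Fin (2 * n)) (hx : (x : ℕ) < n - i) : p x = x := by
    have := hlow x hx
    have := val_apply_of_mem_stab_rowT hp x
    omega
  refine Perm.ext fun x ↦ ?_
  by_contra hne
  rcases val_apply_of_mem_stab_rowT hp x with h | h | h
  · exact hne (Fin.ext h)
  · exact hne (hfix x (by omega))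
  · exact hne (p.injective (hfix (p x) (by omega)))

lemma val_apply_eq_ite_of_mem_stab_rowT {p : Perm (Fin (2 * n))} (hp : p ∈ stab (rowT n i))
    (hhigh : ∀ x : Fin (2 * n), n + i ≤ (x : ℕ) → p x ≠ x) (x : Fin (2 * n)) : (p x : ℕ) =
      if (x : ℕ) < n - i then n + i + x else if (x : ℕ) < n + i then x else x - (n + i) := by
  have hp_high (y : Fin (2 * n)) (hy : n + i ≤ (y : ℕ)) : (y : ℕ) = n + i + p y := by
    have := Fin.val_ne_of_ne (hhigh y hy)
    have := val_apply_of_mem_stab_rowT hp y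
    omega
  have hp_low (hx : (x : ℕ) < n - i) : (p x : ℕ) ≠ x := fun hfix ↦ by
    have hpy := hp_high ⟨n + i + x, by omega⟩ (Nat.le_add_right _ _)
    have hxy := p.injective (Fin.ext (hfix.trans (Nat.add_left_cancel hpy)))
    rw [Fin.ext_iff] at hxy
    omega
  have := hp_high x
  have := val_apply_of_mem_stab_rowT hp x
  split_ifs <;> omega

lemma card_fixedPoints_of_mem_stab_rowT (hi : i ≤ n) {p : Perm (Fin (2 * n))}
    (hp : p ∈ stab (rowT n i)) (hhigh : ∀ x : Fin (2 * n), n + i ≤ (x : ℕ) → p x ≠ x) :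
    Fintype.card (Function.fixedPoints p) = 2 * i := by
  have himage : ({x | p x = x} : Finset (Fin (2 * n))).map Fin.valEmbedding =
      Ico (n - i) (n + i) := by
    ext y
    simp only [mem_map, mem_filter_univ, Fin.ext_iff, val_apply_eq_ite_of_mem_stab_rowT hp hhigh,
      Fin.valEmbedding_apply, mem_Ico]
    constructor
    · rintro ⟨x, hx, rfl⟩
      split_ifs at hx <;> omega
    · intro hy
      refine ⟨⟨y, by omega⟩, ?_, rfl⟩
      dsimp only
      split_ifs <;> omega
  calc Fintype.card (Function.fixedPoints p) = #{x | p x = x} := Fintype.card_subtype _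
    _ = #(Ico (n - i) (n + i)) := by rw [← himage, card_map]
    _ = 2 * i := by rw [Nat.card_Ico]; omega

lemma sgnC_of_mem_stab_rowT (hi : i ≤ n) {p : Perm (Fin (2 * n))} (hp : p ∈ stab (rowT n i))
    (hhigh : ∀ x : Fin (2 * n), n + i ≤ (x : ℕ) → p x ≠ x) : sgnC p = (-1) ^ (n - i) := by
  have hsq : p ^ 2 = 1 := Perm.ext fun x ↦ Fin.ext <| by
    rw [sq, Perm.mul_apply, val_apply_eq_ite_of_mem_stab_rowT hp hhigh,
      val_apply_eq_ite_of_mem_stab_rowT hp hhigh, Perm.one_apply]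
    split_ifs <;> omega
  rw [sgnC, Perm.sign_of_pow_two_eq_one hsq, Fintype.card_fin,
    card_fixedPoints_of_mem_stab_rowT hi hp hhigh, ← Nat.mul_sub,
    Nat.mul_div_cancel_left _ two_pos]
  push_cast
  rfl

lemma sgnC_mul_wreathChar_of_mul_mul_eq_one (hn : 1 ≤ n) (hi : i ≤ n) (hodd : Odd i)
    {q p w : Perm (Fin (2 * n))} (hq : q ∈ stab (colT n i)) (hp : p ∈ stab (rowT n i))
    (hw : w ∈ wreath n) (h : q * p * w = 1) : sgnC q * wreathChar n w = 1 := by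
  have hsgn : sgnC q * sgnC p * sgnC w = 1 := by
    rw [← sgnC_mul, ← sgnC_mul, h]
    simp [sgnC]
  have hlow (x : Fin (2 * n)) : (p (w x) : ℕ) < n + i ↔ (x : ℕ) < n + i := by
    have hqpw : q (p (w x)) = x := DFunLike.congr_fun h x
    rw [← colT_lt_one, ← mem_stab.1 hq, hqpw, colT_lt_one]
  rcases mem_wreath.1 hw with hw | hw
  · have hp_one : p = 1 := eq_one_of_mem_stab_rowT hp fun y hy ↦ by
      obtain ⟨x, rfl⟩ := w.surjective y
      have := hw x
      have := hlow x
      omega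
    rw [hw.wreathChar_eq hn, ← hsgn, hp_one]
    simp [sgnC]
  · have hsgn_p : sgnC p = (-1) ^ (n - i) := sgnC_of_mem_stab_rowT hi hp fun y hy heq ↦ by
      obtain ⟨x, rfl⟩ := w.surjective y
      have := hw x
      have := hlow x
      rw [heq] at this
      omega
    have hparity : Even (n - i) ↔ Even (n - 1) := by
      obtain ⟨m, rfl⟩ := hodd
      exact Nat.even_add.1 ⟨n - 1 - m, by omega⟩
    rw [hw.wreathChar_eq, ← neg_one_pow_congr hparity, ← hsgn_p]
    linear_combination hsgn

lemma youngSym_mul_charIdem_ne_zero (hn : 1 ≤ n) (hi : i ≤ n) (hodd : Odd i) :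
    youngSym (rowT n i) (colT n i) * charIdem (wreath n) (wreathChar n) ≠ 0 := by
  have hW := isQuadraticChar_wreath hn
  rw [charIdem, mul_smul_comm, youngSym_eq]
  refine smul_ne_zero (inv_ne_zero hW.card_ne_zero) ?_
  refine charSum_mul_charSum_mul_charSum_ne_zero (isQuadraticChar_colStab _).one_mem
    (isQuadraticChar_rowStab _).one_mem hW.one_mem fun q hq p hp w hw h ↦ ?_
  rw [Pi.one_apply, mul_one, sgnC_mul_wreathChar_of_mul_mul_eq_one hn hi hodd hq hp hw h]

/-- The generator of the `S^{2^{n-i} 1^{2i}}`-component of `sgn₂[sgn_n]`, set to `0` for the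
indices that do not occur. -/
def componentGen (n i : ℕ) : GA (2 * n) :=
  if Odd i ∧ i ≤ n then
    youngSym (rowT n i) (colT n i) * charIdem (wreath n) (wreathChar n) else 0

lemma componentGen_ne_zero_iff (hn : 1 ≤ n) :
    componentGen n i ≠ 0 ↔ i ∈ ({i ∈ range (n + 1) | Odd i} : Finset ℕ) := by
  rw [componentGen, ite_ne_right_iff,
    and_iff_left_of_imp fun h ↦ youngSym_mul_charIdem_ne_zero hn h.2 h.1, mem_filter, mem_range,
    Nat.lt_succ_iff, and_comm]

lemma componentGen_mul_charIdem (hn : 1 ≤ n) :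
    componentGen n i * charIdem (wreath n) (wreathChar n) = componentGen n i := by
  rw [componentGen]
  split_ifs
  · rw [mul_assoc, (isQuadraticChar_wreath hn).isStarProjection_charIdem.isIdempotentElem.eq]
  · exact zero_mul _

lemma isRankOne_componentGen : IsRankOne ℂ (componentGen n i) := by
  rw [componentGen]
  split_ifs with h
  · exact (isTableau_hookishShape h.2).isRankOne_youngSym.mul_right _
  · exact isRankOne_zero

lemma componentGen_mul_star_componentGen {j : ℕ} (hij : i ≠ j) :
    componentGen n i * star (componentGen n j) = 0 := by
  rw [componentGen, componentGen]
  split_ifs with hi hj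
  · rw [star_mul, mul_assoc, ← mul_assoc (charIdem _ _), ← mul_assoc]
    refine (isTableau_hookishShape hi.2).youngSym_mul_mul_star_youngSym_eq_zero
      (isTableau_hookishShape hj.2) (c := 1) ?_ _
    rw [card_colT_lt_one hi.2, card_colT_lt_one hj.2]
    omega
  all_goals simp

lemma nonempty_linearEquiv_spechtIdeal (hn : 1 ≤ n) (hi : i ≤ n) (hodd : Odd i)
    {row col : Fin (2 * n) → ℕ} (h : IsTableau (hookishShape n i) row col) :
    Nonempty (Ideal.span {componentGen n i} ≃ₗ[GA (2 * n)] SpechtIdeal row col) := by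
  obtain ⟨g, hrow, hcol⟩ := (isTableau_hookishShape hi).exists_perm h
  have hunit : IsUnit (of ℂ _ g) := (Group.isUnit g).map (of ℂ (Perm (Fin (2 * n))))
  have hmul : youngSym row col * (of ℂ _ g * charIdem (wreath n) (wreathChar n)) =
      of ℂ _ g * componentGen n i := by
    rw [← of_mul_youngSym_mul_of_inv hrow hcol, componentGen, if_pos ⟨hodd, hi⟩]
    have hinv : of ℂ _ g⁻¹ * of ℂ _ g = 1 := by rw [← map_mul, inv_mul_cancel, map_one]
    rw [mul_assoc (of ℂ _ g * _), ← mul_assoc (of ℂ _ g⁻¹), hinv, one_mul, mul_assoc]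
  have hne : of ℂ _ g * componentGen n i ≠ 0 := by
    rw [Ne, hunit.mul_right_eq_zero, ← Ne, componentGen, if_pos ⟨hodd, hi⟩]
    exact youngSym_mul_charIdem_ne_zero hn hi hodd
  rw [← Ideal.span_singleton_mul_left_unit hunit, ← hmul]
  rw [← hmul] at hne
  exact (h.isRankOne_youngSym.nonempty_linearEquiv_span_mul hne).map LinearEquiv.symm

end HookishShape

/-- the composition product `sgn₂[sgn_n]` decomposes into irreducibles as
the multiplicity-free direct sum of the Specht modules `S^{2^{n−i} 1^{2i}}` over all odd
`i` with `1 ≤ i ≤ n`. -/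
theorem stmt11 (n : ℕ) (hn : 1 ≤ n) :
    ∃ U : ℕ → Submodule (GA (2 * n)) ↥(compProduct n),
      DirectSum.IsInternal U ∧
      (∀ i, Odd i → i ≤ n →
        ∀ row col : Fin (2 * n) → ℕ, IsTableau (hookishShape n i) row col →
          Nonempty (↥(U i) ≃ₗ[GA (2 * n)] ↥(SpechtIdeal row col))) ∧
      (∀ i, ¬ (Odd i ∧ i ≤ n) → U i = ⊥) := by
  have hspan : compProduct n = Ideal.span {charIdem (wreath n) (wreathChar n)} :=
    (isQuadraticChar_wreath hn).span_charIdem.symm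
  have hle (i : ℕ) : Ideal.span {componentGen n i} ≤
      Ideal.span {charIdem (wreath n) (wreathChar n)} :=
    (Ideal.span_singleton_le_iff_mem _).2
      (Ideal.mem_span_singleton'.2 ⟨_, componentGen_mul_charIdem hn⟩)
  rw [hspan]
  refine ⟨_, isInternal_span_of_isRankOne (x := componentGen n)
    (isQuadraticChar_wreath hn).isStarProjection_charIdem (fun _ ↦ isRankOne_componentGen)
    (fun _ ↦ componentGen_mul_charIdem hn) (fun _ _ ↦ componentGen_mul_star_componentGen)
    (fun _ ↦ componentGen_ne_zero_iff hn) (finrank_corner_wreath_le hn), ?_, ?_⟩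
  · intro i hodd hi row col h
    obtain ⟨φ⟩ := nonempty_linearEquiv_spechtIdeal hn hi hodd h
    exact ⟨(Submodule.comapSubtypeEquivOfLe (hle i)).trans φ⟩
  · intro i hi
    rw [componentGen, if_neg hi, Ideal.span_singleton_zero, Submodule.comap_bot,
      Submodule.ker_subtype]
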